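/- For every natural number ℓ ≥ 6, the Shrikhande graph contains no induced subgraph isomorphic to the complement of the ℓ-cycle; that is, there is no injective map f from Fin ℓ to its vertex set such that f(i) and f(j) are adjacent if and only if i ≠ j and i and j are not consecutive modulo ℓ. -/

import Mathlib

/-!
The Shrikhande graph is the Cayley graph of `(ZMod 4)²` with connection set
`S = {±(0,1), ±(1,0), ±(1,1)}`, so two vertices are compared through their difference alone.

It is strongly regular, and two distinct non-adjacent vertices have only two common neighbours
(`card_common_le_two`). In the complement of the `ℓ`-cycle the vertices `0` and `1` are
non-adjacent and `3, 4, ..., ℓ - 2` are common neighbours of both, so `ℓ ≥ 7` is impossible.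

For `ℓ = 6` the complement of the cycle is the triangular prism, with triangles `0, 2, 4` and
`1, 3, 5` joined by the matching `0-3, 2-5, 4-1`. Put `0` at the origin. Deleting `5` from the prism
leaves an induced house (a 4-cycle `0, 4, 1, 3` and the triangle `0, 2, 4`), and a finite search
shows that this forces `3 ↦ r` and `4 ↦ q` with `r = -q` (`eq_neg_of_house`). Deleting `1` instead
exchanges the roles of `2` and `4`, so `2` and `4` have the same image, a contradiction.
-/

/-- The Shrikhande graph on `(ZMod 4) × (ZMod 4)`: distinct vertices `(a,b)` and `(c,d)` are
adjacent iff `(a-c, b-d) ∈ {(0,1),(0,3),(1,0),(3,0),(1,1),(3,3)}` (arithmetic mod 4; this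
difference set is closed under negation, so the symmetrization `fromRel` does not change it). -/
def shrikhande : SimpleGraph (ZMod 4 × ZMod 4) :=
  SimpleGraph.fromRel (fun u v =>
    (u.1 - v.1, u.2 - v.2) ∈
      ({(0, 1), (0, 3), (1, 0), (3, 0), (1, 1), (3, 3)} : Finset (ZMod 4 × ZMod 4)))

/-- The connection set of the Shrikhande graph as a Cayley graph of `ZMod 4 × ZMod 4`. -/
def shrikhandeSteps : Finset (ZMod 4 × ZMod 4) :=
  {(0, 1), (0, 3), (1, 0), (3, 0), (1, 1), (3, 3)}

lemma shrikhande_adj_iff (u v : ZMod 4 × ZMod 4) :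
    shrikhande.Adj u v ↔ v - u ∈ shrikhandeSteps := by
  have key : ∀ d : ZMod 4 × ZMod 4,
      (d ≠ 0 ∧ (-d ∈ shrikhandeSteps ∨ d ∈ shrikhandeSteps)) ↔ d ∈ shrikhandeSteps := by
    decide
  rw [← key (v - u), neg_sub, sub_ne_zero, ne_comm]
  rfl

lemma card_common_le_two : ∀ d : ZMod 4 × ZMod 4, d ≠ 0 → d ∉ shrikhandeSteps →
    (shrikhandeSteps.filter (fun x => x - d ∈ shrikhandeSteps)).card ≤ 2 := by
  decide

/-- In an induced house (a 4-cycle `0, q, x, r` with a roof `p` on its edge `0, q`), the two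
neighbours of the origin on the 4-cycle are opposite to each other. -/
lemma eq_neg_of_house :
    ∀ p ∈ shrikhandeSteps, ∀ q ∈ shrikhandeSteps, q - p ∈ shrikhandeSteps →
    ∀ r ∈ shrikhandeSteps, r ≠ p → r ≠ q → r - p ∉ shrikhandeSteps → r - q ∉ shrikhandeSteps →
    ∀ x, x ≠ 0 → x ∉ shrikhandeSteps → x - p ∉ shrikhandeSteps →
      x - q ∈ shrikhandeSteps → x - r ∈ shrikhandeSteps → r = -q := by
  decide +kernel

/-- For every `ℓ ≥ 6`, the Shrikhande graph has no induced subgraph isomorphic to the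
complement of the `ℓ`-cycle. -/
theorem shrikhande_no_induced_complement_Cl (ℓ : ℕ) (hℓ : 6 ≤ ℓ) :
    ¬ ∃ f : Fin ℓ → ZMod 4 × ZMod 4, Function.Injective f ∧
      ∀ i j : Fin ℓ, shrikhande.Adj (f i) (f j) ↔
        (i ≠ j ∧ ¬ ((i.val + 1) % ℓ = j.val ∨ (j.val + 1) % ℓ = i.val)) := by
  rintro ⟨f, hinj, hf⟩
  simp only [shrikhande_adj_iff] at hf
  rcases hℓ.eq_or_lt with rfl | h7
  · have hsub : ∀ i j : Fin 6, (f i - f 0) - (f j - f 0) = f i - f j := fun i j => by abel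
    have hdist : ∀ i j : Fin 6, i ≠ j → f i - f 0 ≠ f j - f 0 := fun i j h e =>
      hinj.ne h (sub_left_inj.1 e)
    -- The house on `0, 2, 4, 3, 1`, with roof `2`.
    have h4 := eq_neg_of_house (f 2 - f 0) ((hf _ _).2 (by decide))
      (f 4 - f 0) ((hf _ _).2 (by decide)) (by rw [hsub, hf]; decide)
      (f 3 - f 0) ((hf _ _).2 (by decide)) (hdist _ _ (by decide)) (hdist _ _ (by decide))
      (by rw [hsub, hf]; decide) (by rw [hsub, hf]; decide)
      (f 1 - f 0) (sub_ne_zero.2 (hinj.ne (by decide))) (by rw [hf]; decide)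
      (by rw [hsub, hf]; decide) (by rw [hsub, hf]; decide) (by rw [hsub, hf]; decide)
    -- The house on `0, 4, 2, 3, 5`, with roof `4`.
    have h2 := eq_neg_of_house (f 4 - f 0) ((hf _ _).2 (by decide))
      (f 2 - f 0) ((hf _ _).2 (by decide)) (by rw [hsub, hf]; decide)
      (f 3 - f 0) ((hf _ _).2 (by decide)) (hdist _ _ (by decide)) (hdist _ _ (by decide))
      (by rw [hsub, hf]; decide) (by rw [hsub, hf]; decide)
      (f 5 - f 0) (sub_ne_zero.2 (hinj.ne (by decide))) (by rw [hf]; decide)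
      (by rw [hsub, hf]; decide) (by rw [hsub, hf]; decide) (by rw [hsub, hf]; decide)
    exact hdist 4 2 (by decide) (neg_injective (h4.symm.trans h2))
  · -- `3, 4, 5` are three common neighbours of the non-adjacent vertices `0, 1`.
    let v : ∀ k : ℕ, k < 7 → Fin ℓ := fun k hk => ⟨k, by omega⟩
    have hvne : ∀ j k hj hk, j ≠ k → v j hj ≠ v k hk := fun j k hj hk h e =>
      h (congrArg Fin.val e)
    have hcommon : ∀ k (hk : k < 7), 3 ≤ k → k ≤ 5 → f (v k hk) - f (v 0 (by omega)) ∈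
        shrikhandeSteps.filter
          (fun x => x - (f (v 1 (by omega)) - f (v 0 (by omega))) ∈ shrikhandeSteps) := by
      intro k hk h3 h5
      have hmod : ∀ m ≤ 6, m % ℓ = m := fun m hm => Nat.mod_eq_of_lt (by omega)
      rw [Finset.mem_filter, sub_sub_sub_cancel_right, hf, hf]
      refine ⟨⟨hvne 0 k (by omega) hk (by omega), ?_⟩,
        hvne 1 k (by omega) hk (by omega), ?_⟩ <;>
      · simp only [v]
        rw [hmod _ (by omega), hmod _ (by omega)]
        omega
    have hle := card_common_le_two (f (v 1 (by omega)) - f (v 0 (by omega)))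
      (sub_ne_zero.2 (hinj.ne (hvne 1 0 (by omega) (by omega) (by omega))))
      (by
        rw [hf]
        rintro ⟨-, h⟩
        exact h (Or.inl (Nat.mod_eq_of_lt (by simp only [v]; omega))))
    have hd : ∀ j k hj hk, j ≠ k → f (v j hj) - f (v 0 (by omega)) ≠
        f (v k hk) - f (v 0 (by omega)) := fun j k hj hk h e =>
      hinj.ne (hvne j k hj hk h) (sub_left_inj.1 e)
    have hlt := Finset.two_lt_card.2 ⟨_, hcommon 3 (by omega) (by omega) (by omega),
      _, hcommon 4 (by omega) (by omega) (by omega),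
      _, hcommon 5 (by omega) (by omega) (by omega),
      hd 3 4 (by omega) (by omega) (by omega), hd 3 5 (by omega) (by omega) (by omega),
      hd 4 5 (by omega) (by omega) (by omega)⟩
    omega
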